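/- arXiv:1508.05840 — 2 statements merged into one kernel-verified Lean document; each statement's English description precedes it below -/
import Mathlib

section
/- Let L be a first-order language, M an L-structure, and let X ⊆ (ℕ → M) be defined by an L-formula φ with free variables indexed by ℕ, i.e., X = {s : M ⊨ φ[s]}. Then for every i ∈ ℕ that does not lie in the (finite) set of free variables actually occurring in φ, C_i X = X. Consequently the dimension set Δ(X) = {i ∈ ℕ : C_i X ≠ X} is finite; that is, the cylindric set algebra of definable subsets of ^ℕM is locally finite. -/
open FirstOrder

/-- The cylindrification `C_i X = {s ∈ ^αU : ∃ t ∈ X, t j = s j for all j ≠ i}`. -/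
def Cyl {U α : Type*} (i : α) (X : Set (α → U)) : Set (α → U) :=
  {s | ∃ t ∈ X, ∀ j, j ≠ i → t j = s j}

/-- If `X ⊆ ^ℕM` is defined by an `L`-formula `φ` with free variables indexed by `ℕ`, then
`C_i X = X` for every `i` not among the (finitely many) free variables actually occurring
in `φ`; consequently the dimension set `Δ(X) = {i : C_i X ≠ X}` is finite, i.e. the cylindric
set algebra of definable subsets of `^ℕM` is locally finite. -/
theorem definable_set_locally_finite (L : FirstOrder.Language) (M : Type*) [L.Structure M]
    (φ : L.Formula ℕ) :
    (∀ i : ℕ, i ∉ φ.freeVarFinset →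
      Cyl i {s : ℕ → M | φ.Realize s} = {s : ℕ → M | φ.Realize s}) ∧
    {i : ℕ | Cyl i {s : ℕ → M | φ.Realize s} ≠ {s : ℕ → M | φ.Realize s}}.Finite := by
  have key : ∀ i : ℕ, i ∉ φ.freeVarFinset →
      Cyl i {s : ℕ → M | φ.Realize s} = {s : ℕ → M | φ.Realize s} := by
    intro i hi
    ext s
    constructor
    · rintro ⟨t, ht, hts⟩
      have h1 := (FirstOrder.Language.BoundedFormula.realize_restrictFreeVar (φ := φ) (f := Subtype.val) (v := t)
        (xs := default) t (fun _ => rfl)).2 ht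
      exact (FirstOrder.Language.BoundedFormula.realize_restrictFreeVar (φ := φ) (f := Subtype.val) (v := t)
        (xs := default) s (fun a => hts a (fun h => hi (h ▸ a.2)))).1 h1
    · intro hs
      exact ⟨s, hs, fun _ _ => rfl⟩
  refine ⟨key, φ.freeVarFinset.finite_toSet.subset ?_⟩
  intro i hi
  by_contra h
  exact hi (key i h)
end

section
/- Let U be a set, α a type, k a natural number, and β = α ⊕ Fin k. For a subset X ⊆ ^βU the following are equivalent: (i) C_j X = X for every index j lying in the Fin k summand of β; (ii) there exists Y ⊆ ^αU such that X = {s ∈ ^βU : s ∘ inl ∈ Y}. That is, the α-neat reduct of the full cylindric set algebra of dimension β over U consists precisely of the cylinders over ^αU. -/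
/-- Let `β = α ⊕ Fin k`.  A subset `X ⊆ ^βU` satisfies `C_j X = X` for every index `j` in the
`Fin k` summand if and only if `X` is a cylinder over `^αU`, i.e. `X = {s : s ∘ inl ∈ Y}` for
some `Y ⊆ ^αU`.  Thus the `α`-neat reduct of the full cylindric set algebra of dimension `β`
over `U` consists exactly of the cylinders over `^αU`. -/
theorem neat_reduct_of_full_set_algebra (U α : Type*) (k : ℕ)
    (X : Set ((α ⊕ Fin k) → U)) :
    (∀ j : Fin k, Cyl (Sum.inr j) X = X) ↔
      ∃ Y : Set (α → U), X = {s : (α ⊕ Fin k) → U | (fun a => s (Sum.inl a)) ∈ Y} := by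
  constructor
  · intro h
    refine ⟨(fun s a => s (Sum.inl a)) '' X, ?_⟩
    ext s
    constructor
    · intro hs
      exact ⟨s, hs, rfl⟩
    · rintro ⟨t, ht, hts⟩
      have key : ∀ n : ℕ, n ≤ k →
          (Sum.elim (fun a => s (Sum.inl a))
            (fun j : Fin k => if j.val < n then s (Sum.inr j) else t (Sum.inr j))) ∈ X := by
        intro n
        induction n with
        | zero =>
          intro _
          convert ht using 1
          funext x
          rcases x with a | j
          · exact (congrFun hts a).symm
          · simp
        | succ n ih =>
          intro hn
          rw [← h ⟨n, hn⟩]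
          refine ⟨_, ih (by omega), ?_⟩
          rintro (a | j) hj
          · rfl
          · have hne : j.val ≠ n := fun e => hj (congrArg Sum.inr (Fin.ext e))
            have : j.val < n + 1 ↔ j.val < n := by omega
            simp only [Sum.elim_inr, this]
      convert key k le_rfl using 1
      funext x
      rcases x with a | j
      · rfl
      · simp
  · rintro ⟨Y, rfl⟩ j
    ext s
    constructor
    · rintro ⟨t, ht, hts⟩
      have : (fun a => t (Sum.inl a)) = fun a => s (Sum.inl a) :=
        funext fun a => hts _ (by simp)
      simpa [this] using ht
    · intro hs
      exact ⟨s, hs, fun _ _ => rfl⟩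
end
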